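/- Let t ≥ 2 and d ≥ 1 be integers and let l and n be integers with l > d and n > t. If for every integer s with 2 ≤ s ≤ t the inequality n^s · (1 − q(s,1/t))^l ≤ n/(2(t−1)·d·l^d) holds, where q(s,p) = s·p·(1−p)^(s−1), then there exists a weak (t,d)-superimposed code of length l and size at least n/2. -/

import Mathlib

/-!
The proof is the probabilistic method with alterations. Fill an `n × l` array with independent bits,
each equal to `1` with probability `p = 1 / t`; its rows are `n` random vectors of length `l`, and
its columns correspond to the coordinates.
For a set `S` of `s` indices, each coordinate has exactly one `1` on `S` with probability
`q s p` (`sum_colWeight_exactlyOne`), independently over coordinates. The key estimate is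
`q s (1 / t) ≤ 1 / 2` for `s ≤ t` (`q_le_half`): every prescribed pattern of success coordinates then
has probability at most `(1 - q) ^ l`, and fewer than `d` successes are described by at most
`d * l ^ d` patterns (`sum_arrayWeight_bad`). Summing over the at most `n ^ s` index sets of each size
`2 ≤ s ≤ t`, the hypothesis bounds the expected number of bad index sets by `n / 2`, so some array
has at most `n / 2` of them. Removing one index from each bad set leaves at least `n / 2` indices
with no bad subset (`exists_code_of_few_bad`). Since `d ≥ 1`, two equal vectors would form a bad
pair, so the remaining vectors are distinct and form the desired code.
-/

/-- The coordinates in which exactly one vector of `S` has a `1`. -/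
def exactlyOneCoords {l : ℕ} (S : Finset (Fin l → Bool)) : Finset (Fin l) :=
  Finset.univ.filter (fun i => (S.filter (fun c => c i = true)).card = 1)

/-- A weak `(t,d)`-superimposed code of length `l`. -/
def IsWeakSuperimposed (t d l : ℕ) (C : Finset (Fin l → Bool)) : Prop :=
  ∀ S ⊆ C, 2 ≤ S.card → S.card ≤ t → d ≤ (exactlyOneCoords S).card

/-- `q s p = s * p * (1 - p)^(s-1)`. -/
noncomputable def q (s : ℕ) (p : ℝ) : ℝ := (s : ℝ) * p * (1 - p) ^ (s - 1)

/-! ### One random column -/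

/-- Distributivity: the total product weight over all functions is the product of the total
weights of the factors. -/
lemma sum_prod_pi {ι α : Type*} [Fintype ι] [DecidableEq ι] [Fintype α]
    (f : ι → α → ℝ) : ∑ y : ι → α, ∏ i, f i (y i) = ∏ i, ∑ b, f i b := by
  rw [Finset.prod_univ_sum, Fintype.piFinset_univ]

/-- The probability of the column `y` of `n` independent bits, each `true` with probability `p`. -/
noncomputable def colWeight (n : ℕ) (p : ℝ) (y : Fin n → Bool) : ℝ :=
  ∏ i, if y i = true then p else 1 - p

/-- The column `y` has exactly one `true` among the indices in `S`. -/
abbrev ExactlyOneOn {n : ℕ} (S : Finset (Fin n)) (y : Fin n → Bool) : Prop :=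
  (S.filter (fun i => y i = true)).card = 1

lemma sum_colWeight (n : ℕ) (p : ℝ) : ∑ y, colWeight n p y = 1 := by
  unfold colWeight
  rw [sum_prod_pi (fun _ b => if b = true then p else 1 - p)]
  simp

lemma colWeight_pos {n : ℕ} {p : ℝ} (h0 : 0 < p) (h1 : p < 1) (y : Fin n → Bool) :
    0 < colWeight n p y := by
  unfold colWeight
  refine Finset.prod_pos fun i _ => ?_
  split_ifs <;> linarith

/-- The event that a column has exactly one `true` on `S` is the disjoint union over `a ∈ S` of the
events that `a` is the only index of `S` carrying `true`; each of these factorizes over bits. -/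
lemma exactlyOne_indicator {n : ℕ} (p : ℝ) (S : Finset (Fin n)) (y : Fin n → Bool) :
    (if ExactlyOneOn S y then colWeight n p y else 0) =
      ∑ a ∈ S, ∏ i, (if i ∈ S ∧ (y i = true ↔ i ≠ a) then 0
        else if y i = true then p else 1 - p) := by
  have key : ∀ a ∈ S, (∏ i, (if i ∈ S ∧ (y i = true ↔ i ≠ a) then (0 : ℝ)
        else if y i = true then p else 1 - p)) =
      if S.filter (fun i => y i = true) = {a} then colWeight n p y else 0 := by
    intro a ha
    split_ifs with h
    · unfold colWeight
      refine Finset.prod_congr rfl fun i _ => ?_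
      rw [if_neg]
      rintro ⟨hi, hiff⟩
      have := Finset.ext_iff.1 h i
      simp only [Finset.mem_filter, Finset.mem_singleton] at this
      tauto
    · have : ∃ i, i ∈ S ∧ (y i = true ↔ i ≠ a) := by
        by_contra hc
        push Not at hc
        apply h
        ext i
        simp only [Finset.mem_filter, Finset.mem_singleton]
        constructor
        · rintro ⟨hi, hy⟩
          have := hc i hi
          tauto
        · rintro rfl
          have := hc i ha
          tauto
      obtain ⟨i, hi⟩ := this
      exact Finset.prod_eq_zero (Finset.mem_univ i) (if_pos hi)
  rw [Finset.sum_congr rfl key]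
  split_ifs with h
  · obtain ⟨b, hb⟩ := Finset.card_eq_one.1 h
    have hbS : b ∈ S := by
      have : b ∈ S.filter (fun i => y i = true) := by rw [hb]; simp
      exact (Finset.mem_filter.1 this).1
    simp only [hb, Finset.singleton_inj]
    simp [hbS]
  · symm
    refine Finset.sum_eq_zero fun a _ => ?_
    rw [if_neg]
    intro hc
    exact h (by simp [ExactlyOneOn, hc])

/-- A random column has exactly one `true` on `S` with probability `q |S| p`. -/
lemma sum_colWeight_exactlyOne {n : ℕ} (p : ℝ) (S : Finset (Fin n)) :
    ∑ y, (if ExactlyOneOn S y then colWeight n p y else 0) = q S.card p := by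
  simp_rw [exactlyOne_indicator]
  rw [Finset.sum_comm]
  have key : ∀ a ∈ S, ∑ y : Fin n → Bool, ∏ i, (if i ∈ S ∧ (y i = true ↔ i ≠ a) then (0 : ℝ)
        else if y i = true then p else 1 - p) = p * (1 - p) ^ (S.card - 1) := by
    intro a ha
    rw [sum_prod_pi (fun i b => if i ∈ S ∧ (b = true ↔ i ≠ a) then (0 : ℝ)
        else if b = true then p else 1 - p)]
    have h1 : ∀ i, (∑ b : Bool, if i ∈ S ∧ (b = true ↔ i ≠ a) then (0 : ℝ)
        else if b = true then p else 1 - p) =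
        if i ∈ S then (if i = a then p else 1 - p) else 1 := by
      intro i
      by_cases hia : i = a
      · subst hia
        simp [ha]
      · by_cases hi : i ∈ S <;> simp [hi, hia]
    simp_rw [h1]
    rw [Finset.prod_ite_mem, Finset.univ_inter, ← Finset.mul_prod_erase S _ ha, if_pos rfl,
      Finset.prod_congr rfl (g := fun _ => 1 - p)
        (fun i hi => if_neg (Finset.ne_of_mem_erase hi)),
      Finset.prod_const, Finset.card_erase_of_mem ha]
  rw [Finset.sum_congr rfl key, Finset.sum_const, nsmul_eq_mul, q, mul_assoc]

/-! ### The success probability is at most one half -/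

/-- Bernoulli's inequality gives `(1 - 1 / t) ^ (s - 1) ≤ (t - 1) / (t + s - 2)`, and then the claim
amounts to `(s - t) * (t - 2) ≤ 0`. -/
lemma q_le_half {s t : ℕ} (hs : 2 ≤ s) (hst : s ≤ t) : q s (1 / (t : ℝ)) ≤ 1 / 2 := by
  obtain ⟨m, rfl⟩ : ∃ m, s = m + 1 := ⟨s - 1, by omega⟩
  obtain ⟨u, rfl⟩ : ∃ u, t = u + 1 := ⟨t - 1, by omega⟩
  have hu : (1 : ℝ) ≤ u := by exact_mod_cast (by omega : 1 ≤ u)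
  have hmu : (m : ℝ) ≤ u := by exact_mod_cast (by omega : m ≤ u)
  have hm : (0 : ℝ) ≤ m := by positivity
  have hB := one_add_mul_le_pow (a := 1 / (u : ℝ)) (by have : 0 ≤ 1 / (u : ℝ) := by positivity
                                                       linarith) m
  have hinv : (1 - 1 / ((u : ℝ) + 1)) * (1 + 1 / u) = 1 := by field_simp; ring
  have hpow : (1 - 1 / ((u : ℝ) + 1)) ^ m * (1 + 1 / (u : ℝ)) ^ m = 1 := by
    rw [← mul_pow, hinv, one_pow]
  have hz : 0 ≤ (1 - 1 / ((u : ℝ) + 1)) ^ m := by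
    apply pow_nonneg
    rw [sub_nonneg, div_le_one (by positivity)]
    linarith
  have hle : (1 - 1 / ((u : ℝ) + 1)) ^ m * (1 + m * (1 / u)) ≤ 1 := by
    exact (mul_le_mul_of_nonneg_left hB hz).trans_eq hpow
  unfold q
  push_cast
  generalize (1 - 1 / ((u : ℝ) + 1)) ^ m = z at *
  have hle' : z * (u + m) ≤ u := by
    have : z * (1 + m * (1 / u)) = z * (u + m) / u := by field_simp
    rw [this, div_le_one (by positivity)] at hle
    exact hle
  have hz' : z ≤ u / (u + m) := by rw [le_div_iff₀ (by positivity)]; exact hle'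
  calc ((m : ℝ) + 1) * (1 / (u + 1)) * z
      ≤ ((m : ℝ) + 1) * (1 / (u + 1)) * (u / (u + m)) := by gcongr
    _ ≤ 1 / 2 := by
      rw [show ((m : ℝ) + 1) * (1 / (u + 1)) * (u / (u + m)) =
        ((m + 1) * u) / ((u + 1) * (u + m)) by field_simp,
        div_le_div_iff₀ (by positivity) (by positivity)]
      nlinarith [mul_nonneg (sub_nonneg.2 hmu) (sub_nonneg.2 hu)]

/-! ### Bad index sets of a random array -/

lemma card_small_subsets {l d : ℕ} (hl : d < l) :
    ((Finset.univ : Finset (Finset (Fin l))).filter (fun J => J.card < d)).card ≤ d * l ^ d := by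
  have hsub : (Finset.univ : Finset (Finset (Fin l))).filter (fun J => J.card < d) ⊆
      (Finset.range d).biUnion (fun j => Finset.powersetCard j Finset.univ) := by
    intro J hJ
    simpa using hJ
  refine (Finset.card_le_card hsub).trans ?_
  refine (Finset.card_biUnion_le_card_mul _ _ (l ^ d) fun j hj => ?_).trans (by simp)
  rw [Finset.card_powersetCard, Finset.card_univ, Fintype.card_fin]
  exact (Nat.choose_le_pow l j).trans
    (Nat.pow_le_pow_right (by omega) (Finset.mem_range.1 hj).le)

/-- The index set `S` is bad for the array with columns `x k`: fewer than `d` of the columns have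
exactly one `true` on `S`. -/
abbrev IsBad {n l : ℕ} (d : ℕ) (x : Fin l → Fin n → Bool) (S : Finset (Fin n)) : Prop :=
  (Finset.univ.filter (fun k => ExactlyOneOn S (x k))).card < d

/-- The probability of the array with columns `x k`, the columns being independent. -/
noncomputable def arrayWeight {n l : ℕ} (p : ℝ) (x : Fin l → Fin n → Bool) : ℝ :=
  ∏ k, colWeight n p (x k)

lemma sum_arrayWeight (n l : ℕ) (p : ℝ) :
    ∑ x : Fin l → Fin n → Bool, arrayWeight p x = 1 := by
  unfold arrayWeight
  rw [sum_prod_pi (fun _ y => colWeight n p y)]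
  simp [sum_colWeight]

/-- If the success probability `q |S| p` is at most `1 / 2`, then the binomial lower tail below `d`
is at most `d * l ^ d * (1 - q |S| p) ^ l`. -/
lemma sum_arrayWeight_bad {n l d : ℕ} (hl : d < l) (p : ℝ) (S : Finset (Fin n))
    (hq0 : 0 ≤ q S.card p) (hq : q S.card p ≤ 1 / 2) :
    ∑ x : Fin l → Fin n → Bool, (if IsBad d x S then arrayWeight p x else 0) ≤
      (d * l ^ d : ℝ) * (1 - q S.card p) ^ l := by
  have hsplit : ∀ x : Fin l → Fin n → Bool, (if IsBad d x S then arrayWeight p x else 0) =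
      ∑ J ∈ (Finset.univ : Finset (Finset (Fin l))).filter (fun J => J.card < d),
        ∏ k, (if (ExactlyOneOn S (x k) ↔ k ∈ J) then colWeight n p (x k) else 0) := by
    intro x
    have key : ∀ J : Finset (Fin l),
        ∏ k, (if (ExactlyOneOn S (x k) ↔ k ∈ J) then colWeight n p (x k) else 0) =
        if Finset.univ.filter (fun k => ExactlyOneOn S (x k)) = J then arrayWeight p x else 0 := by
      intro J
      rw [Finset.prod_ite_zero]
      simp [arrayWeight, Finset.ext_iff]
    simp_rw [key]
    rw [Finset.sum_ite_eq]
    simp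
  simp_rw [hsplit]
  rw [Finset.sum_comm]
  have hJ : ∀ J : Finset (Fin l), ∑ x : Fin l → Fin n → Bool,
      ∏ k, (if (ExactlyOneOn S (x k) ↔ k ∈ J) then colWeight n p (x k) else 0) ≤
      (1 - q S.card p) ^ l := by
    intro J
    rw [sum_prod_pi (fun k y => if (ExactlyOneOn S y ↔ k ∈ J) then colWeight n p y else 0)]
    have hk : ∀ k, (∑ y, if (ExactlyOneOn S y ↔ k ∈ J) then colWeight n p y else 0) =
        if k ∈ J then q S.card p else 1 - q S.card p := by
      intro k
      split_ifs with h
      · simp only [h, iff_true]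
        exact sum_colWeight_exactlyOne p S
      · simp only [h, iff_false]
        rw [← sum_colWeight_exactlyOne p S, ← sum_colWeight n p, ← Finset.sum_sub_distrib]
        refine Finset.sum_congr rfl fun y _ => ?_
        by_cases hy : ExactlyOneOn S y
        · rw [if_neg (not_not.2 hy), if_pos hy, sub_self]
        · rw [if_pos hy, if_neg hy, sub_zero]
    simp_rw [hk]
    calc ∏ k, (if k ∈ J then q S.card p else 1 - q S.card p)
        ≤ ∏ _k : Fin l, (1 - q S.card p) := by
          refine Finset.prod_le_prod (fun k _ => ?_) (fun k _ => ?_) <;> split_ifs <;> linarith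
      _ = _ := by simp
  refine (Finset.sum_le_sum fun J _ => hJ J).trans ?_
  rw [Finset.sum_const, nsmul_eq_mul]
  have : (0 : ℝ) ≤ (1 - q S.card p) ^ l := pow_nonneg (by linarith) _
  gcongr
  exact_mod_cast card_small_subsets hl

/-- The index sets of size between `2` and `t` that are bad for the array `x`. -/
noncomputable def badSets {n l : ℕ} (t d : ℕ) (x : Fin l → Fin n → Bool) :
    Finset (Finset (Fin n)) :=
  (Finset.Icc 2 t).biUnion fun s => (Finset.powersetCard s Finset.univ).filter (IsBad d x)

/-! ### Alteration and conclusion -/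

/-- Alteration step: deleting one index from each bad set leaves a code of size at least `n / 2` when
there are at most `n / 2` bad sets. The remaining rows are distinct, since equal rows form a bad pair. -/
lemma exists_code_of_few_bad {n l t d : ℕ} (ht : 2 ≤ t) (hd : 1 ≤ d)
    (x : Fin l → Fin n → Bool) (hx : ((badSets t d x).card : ℝ) ≤ n / 2) :
    ∃ C : Finset (Fin l → Bool), IsWeakSuperimposed t d l C ∧ (n : ℝ) / 2 ≤ (C.card : ℝ) := by
  classical
  have hne : ∀ S ∈ badSets t d x, S.Nonempty := by
    intro S hS
    simp only [badSets, Finset.mem_biUnion, Finset.mem_filter, Finset.mem_powersetCard,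
      Finset.mem_Icc] at hS
    obtain ⟨s, hs, ⟨_, hc⟩, _⟩ := hS
    rw [← Finset.card_pos]; omega
  choose f hf using hne
  set D : Finset (Fin n) := (badSets t d x).attach.image (fun S => f S.1 S.2) with hD
  have hDcard : D.card ≤ (badSets t d x).card := by
    simpa using (Finset.card_image_le : D.card ≤ (badSets t d x).attach.card)
  have hgood : ∀ S : Finset (Fin n), S ⊆ Dᶜ → 2 ≤ S.card → S.card ≤ t → ¬ IsBad d x S := by
    intro S hS h2 hst hbad
    have hmem : S ∈ badSets t d x := by
      simp only [badSets, Finset.mem_biUnion, Finset.mem_filter, Finset.mem_powersetCard,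
        Finset.mem_Icc]
      exact ⟨S.card, ⟨h2, hst⟩, ⟨Finset.subset_univ _, rfl⟩, hbad⟩
    have h1 := hS (hf S hmem)
    rw [Finset.mem_compl] at h1
    exact h1 (Finset.mem_image.2 ⟨⟨S, hmem⟩, Finset.mem_attach _ _, rfl⟩)
  let g : Fin n → Fin l → Bool := fun i k => x k i
  have hinj : Set.InjOn g (Dᶜ : Finset (Fin n)) := by
    intro i hi j hj hij
    by_contra hne
    refine hgood {i, j} ?_ ?_ ?_ ?_
    · intro a ha
      simp only [Finset.mem_insert, Finset.mem_singleton] at ha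
      rcases ha with rfl | rfl
      · exact hi
      · exact hj
    · rw [Finset.card_pair hne]
    · rw [Finset.card_pair hne]; exact ht
    -- Equal vectors contribute zero or two ones in each coordinate.
    · have hnone : ∀ k, ¬ ExactlyOneOn {i, j} (x k) := by
        intro k hk
        have hk' : x k i = x k j := congrFun hij k
        unfold ExactlyOneOn at hk
        cases hxj : x k j <;>
          simp [Finset.filter_insert, Finset.filter_singleton, hk', hxj, hne] at hk
      have hempty : Finset.univ.filter (fun k => ExactlyOneOn {i, j} (x k)) = ∅ :=
        Finset.filter_eq_empty_iff.2 fun k _ => hnone k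
      simp only [IsBad, hempty, Finset.card_empty]
      omega
  refine ⟨Dᶜ.image g, ?_, ?_⟩
  · intro T hT h2 hTt
    obtain ⟨S, hS, rfl⟩ := Finset.subset_image_iff.1 hT
    have hinjS : Set.InjOn g S := hinj.mono hS
    rw [Finset.card_image_of_injOn hinjS] at h2 hTt
    have hS' := not_lt.1 (hgood S hS h2 hTt)
    refine hS'.trans_eq (congrArg Finset.card ?_)
    unfold exactlyOneCoords
    ext k
    simp only [Finset.mem_filter, Finset.mem_univ, true_and, ExactlyOneOn]
    rw [Finset.filter_image, Finset.card_image_of_injOn (hinjS.mono fun i hi => (Finset.mem_filter.1 hi).1)]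
  · rw [Finset.card_image_of_injOn hinj]
    have h1 : Dᶜ.card + D.card = n := by
      rw [Finset.card_compl_add_card]; simp
    have h2 : (Dᶜ.card : ℝ) + D.card = n := by exact_mod_cast h1
    have h3 : (D.card : ℝ) ≤ (badSets t d x).card := by exact_mod_cast hDcard
    linarith

theorem weak_superimposed_existence_of_union_bound (t d l n : ℕ)
    (ht : 2 ≤ t) (hd : 1 ≤ d) (hl : d < l) (hn : t < n)
    (h : ∀ s : ℕ, 2 ≤ s → s ≤ t →
        (n : ℝ) ^ s * (1 - q s (1 / (t : ℝ))) ^ l ≤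
          (n : ℝ) / (2 * ((t : ℝ) - 1) * d * (l : ℝ) ^ d)) :
    ∃ C : Finset (Fin l → Bool), IsWeakSuperimposed t d l C ∧ (n : ℝ) / 2 ≤ (C.card : ℝ) := by
  have ht' : (2 : ℝ) ≤ t := by exact_mod_cast ht
  have hd' : (1 : ℝ) ≤ d := by exact_mod_cast hd
  have hl' : (1 : ℝ) ≤ l := by exact_mod_cast (by omega : 1 ≤ l)
  set p : ℝ := 1 / (t : ℝ) with hp
  have hp0 : 0 < p := by positivity
  have hp1 : p < 1 := by rw [hp, div_lt_one (by positivity)]; linarith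
  -- The expected number of bad index sets is at most `n / 2`.
  have hexp : ∑ x : Fin l → Fin n → Bool, arrayWeight p x * ((badSets t d x).card : ℝ) ≤
      ∑ x : Fin l → Fin n → Bool, arrayWeight p x * ((n : ℝ) / 2) := by
    have hW : ∀ x : Fin l → Fin n → Bool, 0 ≤ arrayWeight p x := fun x =>
      Finset.prod_nonneg fun k _ => (colWeight_pos hp0 hp1 _).le
    rw [← Finset.sum_mul, sum_arrayWeight, one_mul]
    calc ∑ x : Fin l → Fin n → Bool, arrayWeight p x * ((badSets t d x).card : ℝ)
        ≤ ∑ x : Fin l → Fin n → Bool, ∑ s ∈ Finset.Icc 2 t,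
            ∑ S ∈ Finset.powersetCard s Finset.univ,
              (if IsBad d x S then arrayWeight p x else 0) := by
          refine Finset.sum_le_sum fun x _ => ?_
          have h1 : ((badSets t d x).card : ℝ) ≤ ∑ s ∈ Finset.Icc 2 t,
              (((Finset.powersetCard s Finset.univ).filter (IsBad d x)).card : ℝ) := by
            exact_mod_cast Finset.card_biUnion_le
          refine (mul_le_mul_of_nonneg_left h1 (hW x)).trans_eq ?_
          rw [Finset.mul_sum]
          refine Finset.sum_congr rfl fun s _ => ?_
          rw [← Finset.sum_filter, Finset.sum_const, nsmul_eq_mul, mul_comm]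
      _ = ∑ s ∈ Finset.Icc 2 t, ∑ S ∈ Finset.powersetCard s Finset.univ,
            ∑ x : Fin l → Fin n → Bool, (if IsBad d x S then arrayWeight p x else 0) := by
          rw [Finset.sum_comm]
          exact Finset.sum_congr rfl fun s _ => Finset.sum_comm
      _ ≤ ∑ s ∈ Finset.Icc 2 t, (n : ℝ) / (2 * ((t : ℝ) - 1)) := by
          refine Finset.sum_le_sum fun s hs => ?_
          obtain ⟨hs2, hst⟩ := Finset.mem_Icc.1 hs
          have hq0 : 0 ≤ q s p := by
            unfold q
            have : 0 ≤ 1 - p := by linarith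
            positivity
          have hq : q s p ≤ 1 / 2 := q_le_half hs2 hst
          have hr : 0 ≤ (1 - q s p) ^ l := pow_nonneg (by linarith) _
          calc _ ≤ ∑ S ∈ Finset.powersetCard s (Finset.univ : Finset (Fin n)),
                (d * l ^ d : ℝ) * (1 - q s p) ^ l := by
                refine Finset.sum_le_sum fun S hS => ?_
                obtain rfl := (Finset.mem_powersetCard.1 hS).2
                exact sum_arrayWeight_bad hl p S hq0 hq
            _ = (n.choose s : ℝ) * ((d * l ^ d : ℝ) * (1 - q s p) ^ l) := by
                simp [Finset.card_powersetCard]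
            _ ≤ (n : ℝ) ^ s * ((d * l ^ d : ℝ) * (1 - q s p) ^ l) := by
                gcongr
                exact_mod_cast Nat.choose_le_pow n s
            _ = (d * l ^ d : ℝ) * ((n : ℝ) ^ s * (1 - q s p) ^ l) := by ring
            _ ≤ (d * l ^ d : ℝ) * ((n : ℝ) / (2 * ((t : ℝ) - 1) * d * (l : ℝ) ^ d)) := by
                have := h s hs2 hst
                gcongr
            _ = (n : ℝ) / (2 * ((t : ℝ) - 1)) := by
                have : (t : ℝ) - 1 ≠ 0 := by linarith
                field_simp
      _ = (n : ℝ) / 2 := by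
          have h1 : (t : ℝ) - 1 ≠ 0 := by linarith
          rw [Finset.sum_const, Nat.card_Icc, nsmul_eq_mul,
            show ((t + 1 - 2 : ℕ) : ℝ) = (t : ℝ) - 1 by
              rw [Nat.cast_sub (by omega)]; push_cast; ring]
          field_simp
  obtain ⟨x, _, hx⟩ := Finset.exists_le_of_sum_le Finset.univ_nonempty hexp
  have hWx : 0 < arrayWeight p x := Finset.prod_pos fun k _ => colWeight_pos hp0 hp1 _
  exact exists_code_of_few_bad ht hd x (le_of_mul_le_mul_left hx hWx)
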